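/- arXiv:1401.2764 — 3 statements merged into one kernel-verified Lean document; each statement's English description precedes it below -/
import Mathlib

section
/- Let M be a finitely generated graded A-module. Then each homogeneous component M_l is a finite-dimensional F-vector space, and there exist a natural number L, an integer ν ≥ 0, and integers e_0, e_1, …, e_ν such that for every l ≥ L one has dim_F M_l = Σ_{k=0}^{ν} e_k · binomial(l, k); that is, the Hilbert function l ↦ dim_F M_l agrees for large l with a polynomial whose coefficients in the binomial basis are integers. -/
open MvPolynomial

/-- A grading on a module `M` over the polynomial algebra `A = F[Z₁,…,Zₙ]`
(realized as `MvPolynomial (Fin n) F`): an `F`-vector space decomposition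
`M = ⨁ M_l` such that `A_d • M_l ⊆ M_{d+l}` for homogeneous polynomials of
degree `d`. -/
structure PolyGrading (F : Type) [Field F] (n : ℕ) (M : Type)
    [AddCommGroup M] [Module F M] [Module (MvPolynomial (Fin n) F) M]
    [IsScalarTower F (MvPolynomial (Fin n) F) M] where
  piece : ℕ → Submodule F M
  isInternal : DirectSum.IsInternal piece
  smul_mem : ∀ (d l : ℕ) (p : MvPolynomial (Fin n) F), p.IsHomogeneous d →
    ∀ x, x ∈ piece l → p • x ∈ piece (d + l)

namespace HilbPoly

section EP

/-- Evaluate an integer combination of binomials at `l`. -/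
noncomputable def ev (e : ℕ →₀ ℤ) (l : ℕ) : ℤ := e.sum fun k c => c * (l.choose k : ℤ)

lemma ev_zero (l : ℕ) : ev 0 l = 0 := by simp [ev]

lemma ev_single (k : ℕ) (c : ℤ) (l : ℕ) : ev (Finsupp.single k c) l = c * (l.choose k : ℤ) := by
  simp [ev]

lemma ev_add (e e' : ℕ →₀ ℤ) (l : ℕ) : ev (e + e') l = ev e l + ev e' l := by
  unfold ev
  rw [Finsupp.sum_add_index'] <;> intros <;> ring

lemma ev_sub (e e' : ℕ →₀ ℤ) (l : ℕ) : ev (e - e') l = ev e l - ev e' l := by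
  have h := ev_add (e - e') e' l
  rw [sub_add_cancel] at h
  linarith

lemma ev_shift (e : ℕ →₀ ℤ) : ∃ e', ∀ l, ev e (l + 1) = ev e' l := by
  induction e using Finsupp.induction_linear with
  | zero => exact ⟨0, fun l => by simp [ev_zero]⟩
  | add f g hf hg =>
    obtain ⟨a, ha⟩ := hf
    obtain ⟨b, hb⟩ := hg
    exact ⟨a + b, fun l => by rw [ev_add, ev_add, ha, hb]⟩
  | single k c =>
    cases k with
    | zero => exact ⟨Finsupp.single 0 c, fun l => by simp [ev_single]⟩
    | succ k =>
      refine ⟨Finsupp.single k c + Finsupp.single (k + 1) c, fun l => ?_⟩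
      rw [ev_add, ev_single, ev_single, ev_single, Nat.choose_succ_succ]
      push_cast
      ring

lemma ev_anti (e : ℕ →₀ ℤ) : ∃ e', ∀ l, ev e' (l + 1) - ev e' l = ev e l := by
  induction e using Finsupp.induction_linear with
  | zero => exact ⟨0, fun l => by simp [ev_zero]⟩
  | add f g hf hg =>
    obtain ⟨a, ha⟩ := hf
    obtain ⟨b, hb⟩ := hg
    exact ⟨a + b, fun l => by rw [ev_add, ev_add, ev_add, ← ha, ← hb]; ring⟩
  | single k c =>
    refine ⟨Finsupp.single (k + 1) c, fun l => ?_⟩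
    rw [ev_single, ev_single, ev_single, Nat.choose_succ_succ]
    push_cast
    ring

/-- Eventually an integer combination of binomials. -/
def EP (f : ℕ → ℤ) : Prop := ∃ (L : ℕ) (e : ℕ →₀ ℤ), ∀ l, L ≤ l → f l = ev e l

lemma EP.step {f a b : ℕ → ℤ} (ha : EP a) (hb : EP b)
    (h : ∀ l, f (l + 1) - f l = a (l + 1) - b l) : EP f := by
  obtain ⟨L₁, e₁, h₁⟩ := ha
  obtain ⟨L₂, e₂, h₂⟩ := hb
  obtain ⟨e₃, h₃⟩ := ev_shift e₁
  obtain ⟨e₄, h₄⟩ := ev_anti (e₃ - e₂)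
  refine ⟨max L₁ L₂, e₄ + Finsupp.single 0 (f (max L₁ L₂) - ev e₄ (max L₁ L₂)), ?_⟩
  intro l hl
  induction l, hl using Nat.le_induction with
  | base => rw [ev_add, ev_single]; simp
  | succ l hl ih =>
    have q := h l
    have q1 := h₁ (l + 1) (by omega)
    have q2 := h₂ l (by omega)
    have q3 := h₃ l
    have q4 := h₄ l
    rw [ev_sub] at q4
    rw [ev_add, ev_single] at ih ⊢
    simp only [Nat.choose_zero_right] at ih ⊢
    linarith

end EP

lemma finrank_map_ker {F M : Type} [Field F] [AddCommGroup M] [Module F M]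
    (f : M →ₗ[F] M) (V : Submodule F M) [FiniteDimensional F V] :
    Module.finrank F V = Module.finrank F (V.map f) +
      Module.finrank F (V ⊓ LinearMap.ker f : Submodule F M) := by
  have h := LinearMap.finrank_range_add_finrank_ker (f.domRestrict V)
  rw [← h, LinearMap.range_domRestrict]
  congr 1
  rw [LinearMap.ker_domRestrict, (Submodule.equivSubtypeMap V _).finrank_eq,
    Submodule.map_comap_subtype]

lemma finrank_key {F M : Type} [Field F] [AddCommGroup M] [Module F M]
    (f : M →ₗ[F] M) (V U : Submodule F M) [FiniteDimensional F V] [FiniteDimensional F U] :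
    Module.finrank F V + Module.finrank F U =
      Module.finrank F (V ⊓ U.comap f : Submodule F M) +
      Module.finrank F (U ⊔ V.map f : Submodule F M) := by
  have h1 := Submodule.finrank_sup_add_finrank_inf_eq U (V.map f)
  have h2 := finrank_map_ker f V
  have h3 := finrank_map_ker f (V ⊓ U.comap f)
  have h4 : (V ⊓ U.comap f).map f = U ⊓ V.map f := by
    ext x
    simp only [Submodule.mem_map, Submodule.mem_inf, Submodule.mem_comap]
    constructor
    · rintro ⟨y, ⟨hy, hy'⟩, rfl⟩
      exact ⟨hy', y, hy, rfl⟩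
    · rintro ⟨hx, y, hy, rfl⟩
      exact ⟨y, ⟨hy, hx⟩, rfl⟩
  have h5 : V ⊓ U.comap f ⊓ LinearMap.ker f = V ⊓ LinearMap.ker f := by
    ext x
    simp only [Submodule.mem_inf, Submodule.mem_comap, LinearMap.mem_ker]
    constructor
    · rintro ⟨⟨h, _⟩, h'⟩
      exact ⟨h, h'⟩
    · rintro ⟨h, h'⟩
      exact ⟨⟨h, by rw [h']; exact U.zero_mem⟩, h'⟩
  rw [h4, h5] at h3
  omega

variable {F : Type} [Field F] {n : ℕ} {M : Type} [AddCommGroup M] [Module F M]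
    [Module (MvPolynomial (Fin n) F) M] [IsScalarTower F (MvPolynomial (Fin n) F) M]

/-- An `F`-subspace closed under the variables is an `A`-submodule. -/
def mkSub (S : Submodule F M)
    (h : ∀ i : Fin n, ∀ x ∈ S, (X i : MvPolynomial (Fin n) F) • x ∈ S) :
    Submodule (MvPolynomial (Fin n) F) M where
  carrier := S
  add_mem' := S.add_mem
  zero_mem' := S.zero_mem
  smul_mem' := by
    intro p
    induction p using MvPolynomial.induction_on with
    | C a =>
      intro x hx
      have : (C a : MvPolynomial (Fin n) F) • x = a • x := by
        rw [← MvPolynomial.algebraMap_eq, algebraMap_smul]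
      rw [this]
      exact S.smul_mem a hx
    | add p q hp hq =>
      intro x hx
      rw [add_smul]
      exact S.add_mem (hp hx) (hq hx)
    | mul_X p i hp =>
      intro x hx
      rw [mul_smul]
      exact hp (h i x hx)

lemma mem_mkSub {S : Submodule F M}
    {h : ∀ i : Fin n, ∀ x ∈ S, (X i : MvPolynomial (Fin n) F) • x ∈ S} {x : M} :
    x ∈ mkSub S h ↔ x ∈ S := Iff.rfl

/-- Multiplication by a variable, as an `F`-linear map. -/
noncomputable def mulX (F : Type) [Field F] {n : ℕ} (M : Type) [AddCommGroup M] [Module F M]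
    [Module (MvPolynomial (Fin n) F) M] [IsScalarTower F (MvPolynomial (Fin n) F) M]
    (i : Fin n) : M →ₗ[F] M :=
  (LinearMap.lsmul (MvPolynomial (Fin n) F) M (X i)).restrictScalars F

lemma mulX_apply (i : Fin n) (x : M) :
    mulX F M i x = (X i : MvPolynomial (Fin n) F) • x := rfl

variable (g : PolyGrading F n M)

/-- Homogeneous component. -/
noncomputable def comp (l : ℕ) : M →ₗ[F] M :=
  (g.piece l).subtype ∘ₗ DirectSum.component F ℕ (fun i => g.piece i) l ∘ₗ
    (LinearEquiv.ofBijective (DirectSum.coeLinearMap g.piece) g.isInternal).symm.toLinearMap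

lemma comp_mem (l : ℕ) (x : M) : comp g l x ∈ g.piece l := by
  simp [comp]

lemma symm_of {l : ℕ} {x : M} (hx : x ∈ g.piece l) :
    (LinearEquiv.ofBijective (DirectSum.coeLinearMap g.piece) g.isInternal).symm x =
      DirectSum.lof F ℕ (fun i => g.piece i) l ⟨x, hx⟩ := by
  rw [LinearEquiv.symm_apply_eq]
  exact (DirectSum.coeLinearMap_lof g.piece l ⟨x, hx⟩).symm

lemma comp_same {l : ℕ} {x : M} (hx : x ∈ g.piece l) : comp g l x = x := by
  simp only [comp, LinearMap.comp_apply, LinearEquiv.coe_coe, symm_of g hx,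
    DirectSum.component.lof_self, Submodule.subtype_apply]

lemma comp_ne {l j : ℕ} {x : M} (hx : x ∈ g.piece j) (h : j ≠ l) : comp g l x = 0 := by
  simp only [comp, LinearMap.comp_apply, LinearEquiv.coe_coe, symm_of g hx,
    DirectSum.component.of, dif_neg h, map_zero]

lemma piece_induction {p : M → Prop} (x : M) (h : ∀ l, ∀ y ∈ g.piece l, p y) (h0 : p 0)
    (hadd : ∀ y z, p y → p z → p (y + z)) : p x :=
  Submodule.iSup_induction g.piece (motive := p)
    (by rw [g.isInternal.submodule_iSup_eq_top]; trivial) h h0 hadd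

lemma X_mem (i : Fin n) {l : ℕ} {x : M} (hx : x ∈ g.piece l) :
    (X i : MvPolynomial (Fin n) F) • x ∈ g.piece (l + 1) := by
  rw [add_comm]
  exact g.smul_mem 1 l _ (isHomogeneous_X F i) x hx

lemma comp_X_succ (i : Fin n) (l : ℕ) (x : M) :
    comp g (l + 1) ((X i : MvPolynomial (Fin n) F) • x) =
      (X i : MvPolynomial (Fin n) F) • comp g l x := by
  refine piece_induction g (p := fun x => comp g (l + 1) ((X i : MvPolynomial (Fin n) F) • x) =
      (X i : MvPolynomial (Fin n) F) • comp g l x) x ?_ ?_ ?_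
  rotate_left
  · simp
  rotate_left
  · intro j y hy
    by_cases h : j = l
    · subst h
      rw [comp_same g hy, comp_same g (X_mem g i hy)]
    · rw [comp_ne g hy h, comp_ne g (X_mem g i hy) (by omega), smul_zero]
  · intro y z hy hz
    simp only [smul_add, map_add, hy, hz]

lemma comp_X_zero (i : Fin n) (x : M) :
    comp g 0 ((X i : MvPolynomial (Fin n) F) • x) = 0 := by
  refine piece_induction g (p := fun x => comp g 0 ((X i : MvPolynomial (Fin n) F) • x) = 0) x ?_ ?_ ?_
  rotate_left
  · simp
  rotate_left
  · intro j y hy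
    exact comp_ne g (X_mem g i hy) (by omega)
  · intro y z hy hz
    simp only [smul_add, map_add, hy, hz, add_zero]

lemma comp_bdd (x : M) : ∃ D, ∀ l, D ≤ l → comp g l x = 0 := by
  refine piece_induction g (p := fun x => ∃ D, ∀ l, D ≤ l → comp g l x = 0) x ?_ ?_ ?_
  rotate_left
  · exact ⟨0, by simp⟩
  rotate_left
  · intro j y hy
    exact ⟨j + 1, fun l hl => comp_ne g hy (by omega)⟩
  · rintro y z ⟨a, ha⟩ ⟨b, hb⟩
    exact ⟨max a b, fun l hl => by rw [map_add, ha l (by omega), hb l (by omega), add_zero]⟩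

lemma finite_piece [Module.Finite (MvPolynomial (Fin n) F) M] (l : ℕ) :
    FiniteDimensional F (g.piece l) := by
  have : IsNoetherian (MvPolynomial (Fin n) F) M := inferInstance
  have hfg : (Submodule.span (MvPolynomial (Fin n) F) (g.piece l : Set M)).FG :=
    IsNoetherian.noetherian _
  obtain ⟨T, hT, hs⟩ := Submodule.fg_span_iff_fg_span_finset_subset _ |>.1 hfg
  let S : Submodule F M := (Submodule.span F (T : Set M)).comap (comp g l) ⊓
    ⨅ j : Fin l, LinearMap.ker (comp g j)
  have hS : ∀ x, x ∈ S ↔ comp g l x ∈ Submodule.span F (T : Set M) ∧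
      ∀ j, j < l → comp g j x = 0 := by
    intro x
    simp only [S, Submodule.mem_inf, Submodule.mem_comap, Submodule.mem_iInf, LinearMap.mem_ker]
    exact and_congr_right fun _ => ⟨fun h j hj => h ⟨j, hj⟩, fun h j => h j j.2⟩
  have hX : ∀ i : Fin n, ∀ x ∈ S, (X i : MvPolynomial (Fin n) F) • x ∈ S := by
    intro i x hx
    rw [hS] at hx ⊢
    have key : ∀ j, j ≤ l → comp g j ((X i : MvPolynomial (Fin n) F) • x) = 0 := by
      intro j hj
      cases j with
      | zero => exact comp_X_zero g i x
      | succ j => rw [comp_X_succ, hx.2 j (by omega), smul_zero]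
    exact ⟨by rw [key l le_rfl]; exact Submodule.zero_mem _, fun j hj => key j hj.le⟩
  have hle : Submodule.span (MvPolynomial (Fin n) F) (T : Set M) ≤ mkSub S hX := by
    rw [Submodule.span_le]
    intro t ht
    change t ∈ S
    rw [hS]
    have h1 : t ∈ g.piece l := hT ht
    exact ⟨by rw [comp_same g h1]; exact Submodule.subset_span ht,
      fun j hj => comp_ne g h1 (by omega)⟩
  have hfin : g.piece l ≤ Submodule.span F (T : Set M) := by
    intro x hx
    have h1 : x ∈ S := hle (hs ▸ Submodule.subset_span hx)
    have h2 := ((hS x).1 h1).1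
    rwa [comp_same g hx] at h2
  have : FiniteDimensional F (Submodule.span F (T : Set M)) :=
    FiniteDimensional.span_finset F T
  exact Submodule.finiteDimensional_of_le hfin

/-- Homogeneous submodule. -/
def Hom (N : Submodule (MvPolynomial (Fin n) F) M) : Prop :=
  ∀ x ∈ N, ∀ l, comp g l x ∈ N

/-- Degree `l` part of a submodule. -/
noncomputable def part (N : Submodule (MvPolynomial (Fin n) F) M) (l : ℕ) : Submodule F M :=
  N.restrictScalars F ⊓ g.piece l

lemma mem_part {N : Submodule (MvPolynomial (Fin n) F) M} {l : ℕ} {x : M} :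
    x ∈ part g N l ↔ x ∈ N ∧ x ∈ g.piece l := Iff.rfl

/-- Hilbert function of a submodule. -/
noncomputable def hf (N : Submodule (MvPolynomial (Fin n) F) M) (l : ℕ) : ℤ :=
  (Module.finrank F (part g N l) : ℤ)

lemma base_case [Module.Finite (MvPolynomial (Fin n) F) M]
    (N N' : Submodule (MvPolynomial (Fin n) F) M) (hN' : Hom g N') (hle : N' ≤ N)
    (h : ∀ i : Fin n, ∀ x ∈ N, (X i : MvPolynomial (Fin n) F) • x ∈ N') :
    EP (fun l => hf g N l - hf g N' l) := by
  have hfg : N.FG := IsNoetherian.noetherian _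
  obtain ⟨T, hT⟩ := hfg
  choose D hD using comp_bdd g
  let B := T.sup D
  let S : Submodule F M := N.restrictScalars F ⊓
    ⨅ j : {j : ℕ // B ≤ j}, (N'.restrictScalars F).comap (comp g j)
  have hS : ∀ x, x ∈ S ↔ x ∈ N ∧ ∀ j, B ≤ j → comp g j x ∈ N' := by
    intro x
    simp only [S, Submodule.mem_inf, Submodule.mem_comap, Submodule.mem_iInf,
      Submodule.restrictScalars_mem]
    exact and_congr_right fun _ => ⟨fun h j hj => h ⟨j, hj⟩, fun h j => h j j.2⟩
  have hX : ∀ i : Fin n, ∀ x ∈ S, (X i : MvPolynomial (Fin n) F) • x ∈ S := by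
    intro i x hx
    rw [hS] at hx ⊢
    have := h i x hx.1
    exact ⟨hle this, fun j _ => hN' _ this j⟩
  have hNS : N ≤ mkSub S hX := by
    conv_lhs => rw [← hT]
    rw [Submodule.span_le]
    intro t ht
    change t ∈ S
    rw [hS]
    refine ⟨hT ▸ Submodule.subset_span ht, fun j hj => ?_⟩
    rw [hD t j ((Finset.le_sup ht).trans hj)]
    exact N'.zero_mem
  refine ⟨B, 0, fun l hl => ?_⟩
  have : part g N l = part g N' l := by
    ext x
    rw [mem_part, mem_part]
    refine and_congr_left fun hx => ⟨fun hxN => ?_, fun hx' => hle hx'⟩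
    have h2 := ((hS x).1 (hNS hxN)).2 l hl
    rwa [comp_same g hx] at h2
  simp only [hf]
  rw [this, ev_zero, sub_self]

lemma main_ind [Module.Finite (MvPolynomial (Fin n) F) M] (k : ℕ) :
    ∀ (N N' : Submodule (MvPolynomial (Fin n) F) M), Hom g N → Hom g N' → N' ≤ N →
    (∀ i : Fin n, k ≤ i.1 → ∀ x ∈ N, (X i : MvPolynomial (Fin n) F) • x ∈ N') →
    EP (fun l => hf g N l - hf g N' l) := by
  have hfd := finite_piece g
  have hfd' : ∀ N l, FiniteDimensional F (part g N l) := fun N l =>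
    Submodule.finiteDimensional_of_le (inf_le_right : part g N l ≤ g.piece l)
  induction k with
  | zero =>
    intro N N' _ hN' hle h
    exact base_case g N N' hN' hle fun i => h i (Nat.zero_le _)
  | succ k ih =>
    intro N N' hN hN' hle h
    by_cases hk : k < n
    swap
    · exact ih N N' hN hN' hle fun i hi => absurd i.2 (by omega)
    let i : Fin n := ⟨k, hk⟩
    let φ := LinearMap.lsmul (MvPolynomial (Fin n) F) M (X i)
    have hφ : ∀ x, φ x = (X i : MvPolynomial (Fin n) F) • x := fun _ => rfl
    let K := N ⊓ N'.comap φ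
    let P := N' ⊔ N.map φ
    have hK : Hom g K := by
      rintro x ⟨hx, hx'⟩ l
      refine ⟨hN x hx l, ?_⟩
      change (X i : MvPolynomial (Fin n) F) • comp g l x ∈ N'
      rw [← comp_X_succ]
      exact hN' _ hx' _
    have hP : Hom g P := by
      intro x hx l
      obtain ⟨a, ha, b, ⟨c, hc, rfl⟩, rfl⟩ := Submodule.mem_sup.1 hx
      rw [map_add]
      refine P.add_mem (Submodule.mem_sup_left (hN' a ha l)) ?_
      rw [hφ]
      cases l with
      | zero => rw [comp_X_zero]; exact P.zero_mem
      | succ l =>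
        rw [comp_X_succ]
        exact Submodule.mem_sup_right ⟨_, hN c hc l, rfl⟩
    have hPN : P ≤ N := by
      refine sup_le hle ?_
      rintro _ ⟨c, hc, rfl⟩
      exact N.smul_mem _ hc
    have hNK : N' ≤ K := fun x hx => ⟨hle hx, N'.smul_mem _ hx⟩
    have e1 := ih N P hN hP hPN (by
      intro j hj x hx
      rcases eq_or_lt_of_le hj with hj | hj
      · have : j = i := Fin.ext hj.symm
        subst this
        exact Submodule.mem_sup_right ⟨x, hx, rfl⟩
      · exact Submodule.mem_sup_left (h j hj x hx))
    have e2 := ih K N' hK hN' hNK (by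
      intro j hj x hx
      rcases eq_or_lt_of_le hj with hj | hj
      · have : j = i := Fin.ext hj.symm
        subst this
        exact hx.2
      · exact h j hj x hx.1)
    refine EP.step e1 e2 fun l => ?_
    have q := finrank_key (mulX F M i) (part g N l) (part g N' (l + 1))
    have q1 : part g N l ⊓ (part g N' (l + 1)).comap (mulX F M i) = part g K l := by
      ext x
      simp only [Submodule.mem_inf, Submodule.mem_comap, mem_part, mulX_apply]
      constructor
      · rintro ⟨⟨a, b⟩, c, _⟩
        exact ⟨⟨a, c⟩, b⟩
      · rintro ⟨⟨a, c⟩, b⟩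
        exact ⟨⟨a, b⟩, c, X_mem g i b⟩
    have q2 : part g N' (l + 1) ⊔ (part g N l).map (mulX F M i) = part g P (l + 1) := by
      apply le_antisymm
      · refine sup_le ?_ ?_
        · rintro x ⟨a, b⟩
          exact ⟨Submodule.mem_sup_left a, b⟩
        · rintro _ ⟨x, ⟨a, b⟩, rfl⟩
          exact ⟨Submodule.mem_sup_right ⟨x, a, rfl⟩, X_mem g i b⟩
      · rintro x ⟨hx, hxl⟩
        obtain ⟨a, ha, b, ⟨c, hc, rfl⟩, rfl⟩ := Submodule.mem_sup.1 hx
        rw [← comp_same g hxl, map_add, hφ, comp_X_succ]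
        refine Submodule.add_mem _ (Submodule.mem_sup_left ⟨hN' a ha _, comp_mem g _ _⟩)
          (Submodule.mem_sup_right ⟨comp g l c, ⟨hN c hc l, comp_mem g _ _⟩, rfl⟩)
    rw [q1, q2] at q
    simp only [hf]
    have q' : (Module.finrank F (part g N l) : ℤ) + Module.finrank F (part g N' (l + 1)) =
      Module.finrank F (part g K l) + Module.finrank F (part g P (l + 1)) := by exact_mod_cast q
    linarith

end HilbPoly

/-- **Hilbert polynomial theorem.** Each homogeneous component of a finitely
generated graded `A`-module is finite-dimensional over `F`, and the Hilbert
function `l ↦ dim_F M_l` agrees for large `l` with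
`Σ_{k=0}^{ν} e_k · binomial(l,k)` for some integers `e_0, …, e_ν`. -/
theorem stmt_1 {F : Type} [Field F] {n : ℕ} (hn : 1 ≤ n)
    {M : Type} [AddCommGroup M] [Module F M]
    [Module (MvPolynomial (Fin n) F) M]
    [IsScalarTower F (MvPolynomial (Fin n) F) M]
    (g : PolyGrading F n M) [Module.Finite (MvPolynomial (Fin n) F) M] :
    (∀ l : ℕ, FiniteDimensional F (g.piece l)) ∧
    ∃ (L ν : ℕ) (e : ℕ → ℤ), ∀ l : ℕ, L ≤ l →
      (Module.finrank F (g.piece l) : ℤ) =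
        ∑ k ∈ Finset.range (ν + 1), e k * (l.choose k : ℤ) := by
  refine ⟨HilbPoly.finite_piece g, ?_⟩
  obtain ⟨L, e, h⟩ := HilbPoly.main_ind g n ⊤ ⊥ (fun _ _ _ => trivial)
    (fun x hx l => by
      rw [Submodule.mem_bot] at hx ⊢
      rw [hx, map_zero]) bot_le
    (fun i hi => absurd i.2 (by omega))
  refine ⟨L, e.support.sup id, e, fun l hl => ?_⟩
  have h1 := h l hl
  have t : HilbPoly.part g ⊤ l = g.piece l := by
    ext x
    simp [HilbPoly.mem_part]
  have b : HilbPoly.part g ⊥ l = ⊥ := by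
    ext x
    simp only [HilbPoly.mem_part, Submodule.mem_bot]
    exact ⟨fun h => h.1, fun h => ⟨h, h ▸ Submodule.zero_mem _⟩⟩
  simp only [HilbPoly.hf] at h1
  rw [t, b, finrank_bot] at h1
  rw [Nat.cast_zero, sub_zero] at h1
  rw [h1, HilbPoly.ev]
  refine Finsupp.sum_of_support_subset _ ?_ _ (by simp)
  intro k hk
  rw [Finset.mem_range, Nat.lt_succ_iff]
  exact Finset.le_sup (f := id) hk
end

section
/- Let F be an infinite field and M a finitely generated graded A-module. Then there exist a linear form Z ∈ A_1 and a natural number c such that for every l ≥ c the multiplication map Z : M_l → M_{l+1} is injective. In other words, an ordinary element of degree one exists. -/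
open MvPolynomial

namespace Stmt9Aux

variable {F : Type} [Field F] {n : ℕ} {M : Type} [AddCommGroup M] [Module F M]
    [Module (MvPolynomial (Fin n) F) M] [IsScalarTower F (MvPolynomial (Fin n) F) M]

/-- Elements with components of degree less than `D`. -/
def low (g : PolyGrading F n M) (D : ℕ) : Submodule F M := ⨆ i : ℕ, ⨆ _ : i < D, g.piece i

lemma piece_le_low (g : PolyGrading F n M) {i D : ℕ} (h : i < D) : g.piece i ≤ low g D :=
  le_iSup₂_of_le i h le_rfl

lemma low_mono (g : PolyGrading F n M) {D D' : ℕ} (h : D ≤ D') : low g D ≤ low g D' :=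
  iSup₂_le fun _ hi => piece_le_low g (lt_of_lt_of_le hi h)

lemma exists_low (g : PolyGrading F n M) (x : M) : ∃ D, x ∈ low g D := by
  have hx : x ∈ iSup g.piece := by rw [g.isInternal.submodule_iSup_eq_top]; trivial
  induction hx using Submodule.iSup_induction' with
  | mem i x hx => exact ⟨i + 1, piece_le_low g (Nat.lt_succ_self i) hx⟩
  | zero => exact ⟨0, zero_mem _⟩
  | add x y _ _ hx hy =>
    obtain ⟨a, ha⟩ := hx
    obtain ⟨b, hb⟩ := hy
    exact ⟨max a b, add_mem (low_mono g (le_max_left _ _) ha) (low_mono g (le_max_right _ _) hb)⟩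

lemma smul_low (g : PolyGrading F n M) {d D : ℕ} {p : MvPolynomial (Fin n) F}
    (hp : p.IsHomogeneous d) {x : M} (hx : x ∈ low g D) : p • x ∈ low g (d + D) := by
  have h : low g D ≤ (low g (d + D)).comap (Algebra.lsmul F F M p : M →ₗ[F] M) := by
    refine iSup₂_le fun i hi y hy => ?_
    exact piece_le_low g (by omega) (g.smul_mem d i p hp y hy)
  exact h hx

lemma smul_low_of_kill (g : PolyGrading F n M) {N D : ℕ} {x : M} (hx : x ∈ low g D)
    (hk : ∀ q ∈ idealOfVars (Fin n) F ^ N, q • x = 0) (p : MvPolynomial (Fin n) F) :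
    p • x ∈ low g (N + D) := by
  rw [p.as_sum, Finset.sum_smul]
  refine Submodule.sum_mem _ fun s _ => ?_
  have hh : (monomial s (coeff s p)).IsHomogeneous s.degree := isHomogeneous_monomial _ rfl
  by_cases hs : s.degree < N
  · exact low_mono g (by omega) (smul_low g hh hx)
  · rw [hk]
    · exact zero_mem _
    · rw [mem_pow_idealOfVars_iff']
      intro t ht
      rw [coeff_monomial, if_neg]
      rintro rfl
      exact hs ht

lemma exists_form [Infinite F] (S : Set (Ideal (MvPolynomial (Fin n) F))) (hS : S.Finite) :
    ∃ Z : MvPolynomial (Fin n) F, Z.IsHomogeneous 1 ∧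
      ∀ p ∈ S, Z ∈ p → idealOfVars (Fin n) F ≤ p := by
  let T := {p ∈ S | ¬ idealOfVars (Fin n) F ≤ p}
  have : Finite T := (hS.subset (Set.sep_subset _ _)).to_subtype
  let E := homogeneousSubmodule (Fin n) F 1
  let q : T → Subspace F E := fun p => (p.1.restrictScalars F).comap E.subtype
  by_cases h : ⋃ i, (q i : Set E) = Set.univ
  · obtain ⟨⟨p, hp, hp'⟩, h⟩ := Subspace.exists_eq_top_of_iUnion_eq_univ h
    refine absurd ?_ hp'
    refine Ideal.span_le.2 ?_
    rintro _ ⟨i, rfl⟩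
    have : (⟨X i, isHomogeneous_X F i⟩ : E) ∈ q ⟨p, hp, hp'⟩ := by rw [h]; trivial
    exact this
  · obtain ⟨Z, hZ⟩ := (Set.ne_univ_iff_exists_notMem _).1 h
    refine ⟨Z.1, Z.2, fun p hp hZp => ?_⟩
    by_contra hc
    exact hZ (Set.mem_iUnion.2 ⟨⟨p, hp, hc⟩, hZp⟩)

end Stmt9Aux

open Stmt9Aux in
/-- Over an infinite field, every finitely generated graded `A`-module admits
an ordinary element of degree one: a linear form `Z ∈ A_1` whose multiplication
map `M_l → M_{l+1}` is injective for all sufficiently large `l`. -/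
theorem stmt_9 {F : Type} [Field F] [Infinite F] {n : ℕ} (hn : 1 ≤ n)
    {M : Type} [AddCommGroup M] [Module F M]
    [Module (MvPolynomial (Fin n) F) M]
    [IsScalarTower F (MvPolynomial (Fin n) F) M]
    (g : PolyGrading F n M) [Module.Finite (MvPolynomial (Fin n) F) M] :
    ∃ Z : MvPolynomial (Fin n) F, Z.IsHomogeneous 1 ∧
      ∃ c : ℕ, ∀ l : ℕ, c ≤ l →
        ∀ x ∈ g.piece l, ∀ y ∈ g.piece l, Z • x = Z • y → x = y := by
  obtain ⟨Z, hZ, hZS⟩ := exists_form (associatedPrimes (MvPolynomial (Fin n) F) M)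
    (associatedPrimes.finite _ _)
  refine ⟨Z, hZ, ?_⟩
  let K : Submodule (MvPolynomial (Fin n) F) M := LinearMap.ker (LinearMap.lsmul _ M Z)
  have hKZ : ∀ x, x ∈ K ↔ Z • x = 0 := fun x => Iff.rfl
  have hZK : Z ∈ Module.annihilator (MvPolynomial (Fin n) F) K :=
    Module.mem_annihilator.2 fun k => Subtype.ext k.2
  have : IsNoetherian (MvPolynomial (Fin n) F) M := inferInstance
  have hrad : idealOfVars (Fin n) F ≤
      (Module.annihilator (MvPolynomial (Fin n) F) K).radical := by
    rw [← Ideal.sInf_minimalPrimes]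
    refine le_sInf fun p hp => ?_
    have hp1 := Module.associatedPrimes.minimalPrimes_annihilator_subset_associatedPrimes
      (MvPolynomial (Fin n) F) K hp
    exact hZS p (associatedPrimes.subset_of_injective K.injective_subtype hp1) (hp.1.2 hZK)
  obtain ⟨N, hN⟩ := Ideal.exists_pow_le_of_le_radical_of_fg hrad (idealOfVars_fg _ _)
  have hkill : ∀ k ∈ K, ∀ q ∈ idealOfVars (Fin n) F ^ N, q • k = 0 := fun k hk q hq =>
    congrArg Subtype.val (Module.mem_annihilator.1 (hN hq) ⟨k, hk⟩)
  obtain ⟨T, hT⟩ := IsNoetherian.noetherian K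
  choose D hD using exists_low g
  have hlow : ∀ x ∈ K, x ∈ low g (N + T.sup D) := by
    intro x hx
    rw [← hT, Submodule.mem_span_finset] at hx
    obtain ⟨f, -, rfl⟩ := hx
    refine Submodule.sum_mem _ fun t ht => ?_
    exact smul_low_of_kill g (low_mono g (Finset.le_sup ht) (hD t))
      (hkill t (hT ▸ Submodule.subset_span ht)) _
  refine ⟨N + T.sup D, fun l hl x hx y hy hxy => ?_⟩
  have h1 : x - y ∈ K := by rw [hKZ, smul_sub, hxy, sub_self]
  have h2 := hlow _ h1
  have h3 : low g (N + T.sup D) ≤ ⨆ (j) (_ : j ≠ l), g.piece j :=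
    iSup₂_le fun i hi => le_iSup₂_of_le i (by omega) le_rfl
  exact sub_eq_zero.1
    (Submodule.disjoint_def.1 (g.isInternal.submodule_iSupIndep l) _ (sub_mem hx hy) (h3 h2))
end

section
/- Let F be an infinite field and M a finitely generated graded A-module. Then there exists an F-basis Z₁,…,Zₙ of the space A_1 of linear forms which is ordinary for M: for every i ∈ {0,…,n−1}, writing M(i) = M/(Z₁,…,Z_i)M for the graded quotient of M by the submodule generated by Z₁·M, …, Z_i·M, the multiplication map Z_{i+1} : M(i)_l → M(i)_{l+1} is injective for all sufficiently large l. -/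
open MvPolynomial

lemma exists_piece_le {F : Type} [Field F] {n : ℕ}
    {M : Type} [AddCommGroup M] [Module F M]
    [Module (MvPolynomial (Fin n) F) M]
    [IsScalarTower F (MvPolynomial (Fin n) F) M]
    (g : PolyGrading F n M) [Module.Finite (MvPolynomial (Fin n) F) M] (c : ℕ) :
    ∃ B : ℕ, ∀ l, B ≤ l → ∀ x ∈ g.piece l,
      x ∈ (Ideal.span (Set.range (X : Fin n → MvPolynomial (Fin n) F))) ^ c •
        (⊤ : Submodule (MvPolynomial (Fin n) F) M) := by
  classical
  let A := MvPolynomial (Fin n) F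
  letI dec := g.isInternal.chooseDecomposition
  obtain ⟨s, hs⟩ := (Module.Finite.fg_top : (⊤ : Submodule A M).FG)
  let D := s.sup (fun t => (DirectSum.decompose g.piece t).support.sup id)
  have hG : Submodule.span A {y : M | ∃ j ≤ D, y ∈ g.piece j} = ⊤ := by
    rw [eq_top_iff, ← hs, Submodule.span_le]
    intro t ht
    rw [← DirectSum.sum_support_decompose g.piece t]
    refine Submodule.sum_mem _ fun j hj => Submodule.subset_span ⟨j, ?_, Subtype.property _⟩
    exact (Finset.le_sup (f := id) hj).trans
      (Finset.le_sup (f := fun t => (DirectSum.decompose g.piece t).support.sup id) ht)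
  have key : ∀ x : M, ∀ l, D + c ≤ l → (DirectSum.decompose g.piece x l : M) ∈
      (Ideal.span (Set.range (X : Fin n → MvPolynomial (Fin n) F))) ^ c •
        (⊤ : Submodule (MvPolynomial (Fin n) F) M) := by
    intro x l hl
    have hx : x ∈ Submodule.span A {y : M | ∃ j ≤ D, y ∈ g.piece j} := by rw [hG]; trivial
    induction hx using Submodule.closure_induction with
    | zero => simp
    | add x y _ _ hx hy =>
      rw [DirectSum.decompose_add]
      exact Submodule.add_mem _ hx hy
    | smul_mem p y hy =>
      obtain ⟨j, hj, hy⟩ := hy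
      induction p using MvPolynomial.induction_on' with
      | add p q hp hq =>
        rw [add_smul, DirectSum.decompose_add]
        exact Submodule.add_mem _ hp hq
      | monomial d a =>
        have hm := g.smul_mem d.degree j (monomial d a) (isHomogeneous_monomial a rfl) y hy
        by_cases h : d.degree + j = l
        · subst h
          rw [DirectSum.decompose_of_mem_same _ hm]
          refine Submodule.smul_mem_smul ?_ trivial
          have h1 : monomial d a ∈ (Ideal.span (Set.range (X : Fin n → MvPolynomial (Fin n) F))) ^ d.degree := by
            rw [Ideal.mem_span_pow_iff_exists_isHomogeneous]
            exact ⟨monomial d (C a), isHomogeneous_monomial _ rfl, by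
              simp [eval_monomial, monomial_eq]⟩
          exact Ideal.pow_le_pow_right (by omega) h1
        · rw [DirectSum.decompose_of_mem_ne _ hm h]
          exact Submodule.zero_mem _
  refine ⟨D + c, fun l hl x hx => ?_⟩
  have := key x l hl
  rwa [DirectSum.decompose_of_mem_same _ hx] at this

lemma exists_pow_inf {A M : Type} [CommRing A] [IsNoetherianRing A] [AddCommGroup M] [Module A M]
    [Module.Finite A M] (m : Ideal A) (z : A)
    (hz : ∀ P ∈ associatedPrimes A M, z ∈ P → m ≤ P) :
    ∃ c : ℕ, ∀ x ∈ m ^ c • (⊤ : Submodule A M), z • x = 0 → x = 0 := by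
  let K : Submodule A M := LinearMap.ker (LinearMap.lsmul A M z)
  have h1 : m ≤ (Module.annihilator A K).radical := by
    rw [← Ideal.sInf_minimalPrimes]
    refine le_sInf fun P hP => ?_
    have hP' := Module.associatedPrimes.minimalPrimes_annihilator_subset_associatedPrimes A K hP
    refine hz P (associatedPrimes.subset_of_injective K.injective_subtype hP') ?_
    refine hP.1.2 ?_
    rw [Module.mem_annihilator]
    rintro ⟨k, hk⟩
    ext
    exact hk
  obtain ⟨k, hk⟩ := Ideal.exists_pow_le_of_le_radical_of_fg h1 (IsNoetherian.noetherian m)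
  obtain ⟨e, he⟩ := Ideal.exists_pow_inf_eq_pow_smul m K
  refine ⟨k + e, fun x hx hzx => ?_⟩
  have hx2 : x ∈ m ^ (k + e) • (⊤ : Submodule A M) ⊓ K := ⟨hx, hzx⟩
  rw [he (k + e) (by omega), Nat.add_sub_cancel] at hx2
  have h3 : m ^ k • (m ^ e • (⊤ : Submodule A M) ⊓ K) ≤ ⊥ := by
    rw [Submodule.smul_le]
    rintro r hr y ⟨_, hy⟩
    have := Module.mem_annihilator.1 (hk hr) ⟨y, hy⟩
    simpa using congrArg Subtype.val this
  simpa using h3 hx2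

lemma exists_linear {F : Type} [Field F] [Infinite F] {n : ℕ} 
    (W : Submodule F (MvPolynomial (Fin n) F))
    (hW : ¬ homogeneousSubmodule (Fin n) F 1 ≤ W)
    (T : Set (Ideal (MvPolynomial (Fin n) F))) (hT : T.Finite) :
    ∃ z ∈ homogeneousSubmodule (Fin n) F 1, z ∉ W ∧
      ∀ P ∈ T, z ∈ P → Ideal.span (Set.range (X : Fin n → MvPolynomial (Fin n) F)) ≤ P := by
  classical
  let V := homogeneousSubmodule (Fin n) F 1
  let T' : Finset (Submodule F (MvPolynomial (Fin n) F)) :=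
    insert W (hT.toFinset.image (fun P => P.restrictScalars F))
  let s : Finset (Submodule F V) := ((T'.image (fun U => U.comap V.subtype))).filter (· ≠ ⊤)
  have hs : (⊤ : Subspace F V) ∉ s := by simp [s]
  have := Subspace.biUnion_ne_univ_of_top_notMem hs
  obtain ⟨z, hz⟩ := (Set.ne_univ_iff_exists_notMem _).1 this
  have hz' : ∀ U ∈ T', (z : MvPolynomial (Fin n) F) ∈ U → V ≤ U := by
    intro U hU hzU
    by_contra hVU
    apply hz
    simp only [Set.mem_iUnion]
    refine ⟨U.comap V.subtype, ?_, hzU⟩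
    refine Finset.mem_filter.2 ⟨Finset.mem_image_of_mem _ hU, ?_⟩
    rwa [Ne, Submodule.comap_subtype_eq_top]
  refine ⟨z, z.2, fun h => hW (hz' W (Finset.mem_insert_self _ _) h), fun P hP hzP => ?_⟩
  rw [Ideal.span_le]
  rintro _ ⟨i, rfl⟩
  exact hz' (P.restrictScalars F) (Finset.mem_insert_of_mem
    (Finset.mem_image_of_mem _ (hT.mem_toFinset.2 hP))) hzP (isHomogeneous_X F i)

lemma finrank_linear {F : Type} [Field F] {n : ℕ} :
    Module.finrank F (homogeneousSubmodule (Fin n) F 1) = n := by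
  rw [homogeneousSubmodule_one_eq_span_X, finrank_span_eq_card (linearIndependent_X _ _)]
  simp

/-- **Existence of an ordinary basis.** Over an infinite field `F`, for every
finitely generated graded `A`-module `M` there is an `F`-basis `Z₀, …, Z_{n-1}`
of the space `A_1` of linear forms such that for each `i`, multiplication by
`Z_i` on the graded quotient `M(i) = M/(Z₀,…,Z_{i-1})M` is injective in every
sufficiently large degree: `Z_i • x ∈ (Z₀,…,Z_{i-1})M → x ∈ (Z₀,…,Z_{i-1})M`
for all `x ∈ M_l`, `l` large. -/
theorem stmt_10 {F : Type} [Field F] [Infinite F] {n : ℕ} (hn : 1 ≤ n)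
    {M : Type} [AddCommGroup M] [Module F M]
    [Module (MvPolynomial (Fin n) F) M]
    [IsScalarTower F (MvPolynomial (Fin n) F) M]
    (g : PolyGrading F n M) [Module.Finite (MvPolynomial (Fin n) F) M] :
    ∃ Z : Fin n → MvPolynomial (Fin n) F,
      (∀ i, (Z i).IsHomogeneous 1) ∧
      LinearIndependent F Z ∧
      (∀ p : MvPolynomial (Fin n) F, p.IsHomogeneous 1 →
        p ∈ Submodule.span F (Set.range Z)) ∧
      ∀ i : Fin n, ∃ c : ℕ, ∀ l : ℕ, c ≤ l → ∀ x ∈ g.piece l,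
        Z i • x ∈
          (Ideal.span (Z '' {j : Fin n | j < i})) • (⊤ : Submodule (MvPolynomial (Fin n) F) M) →
        x ∈
          (Ideal.span (Z '' {j : Fin n | j < i})) • (⊤ : Submodule (MvPolynomial (Fin n) F) M) := by
  classical
  have main : ∀ k, k ≤ n → ∃ Z : ℕ → MvPolynomial (Fin n) F, LinearIndepOn F Z (Set.Iio k) ∧
      ∀ i < k, (Z i).IsHomogeneous 1 ∧ ∃ c : ℕ, ∀ l : ℕ, c ≤ l → ∀ x ∈ g.piece l,
        Z i • x ∈
          (Ideal.span (Z '' Set.Iio i)) • (⊤ : Submodule (MvPolynomial (Fin n) F) M) →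
        x ∈
          (Ideal.span (Z '' Set.Iio i)) • (⊤ : Submodule (MvPolynomial (Fin n) F) M) := by
    intro k
    induction k with
    | zero =>
      intro _
      refine ⟨0, ?_, by simp⟩
      have : Set.Iio 0 = (∅ : Set ℕ) := by ext; simp
      rw [this]; exact linearIndepOn_empty _ _
    | succ k ih =>
      intro hk
      obtain ⟨Z, hZ, hZ2⟩ := ih (by omega)
      set N := (Ideal.span (Z '' Set.Iio k)) • (⊤ : Submodule (MvPolynomial (Fin n) F) M) with hN
      have hW : ¬ homogeneousSubmodule (Fin n) F 1 ≤ Submodule.span F (Z '' Set.Iio k) := by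
        intro h
        haveI : Module.Finite F (Submodule.span F (Z '' Set.Iio k)) :=
          Module.Finite.span_of_finite F ((Set.finite_Iio k).image Z)
        have h1 := Submodule.finrank_mono h
        rw [finrank_linear] at h1
        have h2 := finrank_span_finset_le_card (R := F) ((Finset.range k).image Z)
        have h3 : (((Finset.range k).image Z : Finset _) : Set (MvPolynomial (Fin n) F)) = Z '' Set.Iio k := by
          simp
        rw [Set.finrank, h3] at h2
        have h4 := (Finset.card_image_le (s := Finset.range k) (f := Z))
        rw [Finset.card_range] at h4
        omega
      obtain ⟨z, hz1, hz2, hz3⟩ := exists_linear _ hW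
        (associatedPrimes (MvPolynomial (Fin n) F) (M ⧸ N)) (associatedPrimes.finite _ _)
      obtain ⟨c, hc⟩ := exists_pow_inf _ z hz3
      obtain ⟨B, hB⟩ := exists_piece_le g c
      have him : ∀ i ≤ k, (Function.update Z k z) '' Set.Iio i = Z '' Set.Iio i := by
        intro i hi
        apply Set.image_congr
        intro a ha
        have : a < i := ha
        exact Function.update_of_ne (by omega) _ _
      refine ⟨Function.update Z k z, ?_, ?_⟩
      · have : Set.Iio (k+1) = insert k (Set.Iio k) := by ext a; simp only [Set.mem_Iio, Set.mem_insert_iff]; omega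
        rw [this, linearIndepOn_insert (by simp), him k le_rfl, Function.update_self]
        refine ⟨hZ.congr ?_, hz2⟩
        intro a ha
        have : a < k := ha
        exact (Function.update_of_ne (by omega) _ _).symm
      · intro i hi
        rw [him i (by omega)]
        rcases Nat.lt_succ_iff_lt_or_eq.1 hi with h | rfl
        · rw [Function.update_of_ne (by omega)]
          exact hZ2 i h
        · rw [Function.update_self]
          refine ⟨hz1, B, fun l hl x hx hzx => ?_⟩
          rw [← hN] at hzx ⊢
          rw [← Submodule.Quotient.mk_eq_zero] at hzx ⊢
          refine hc _ ?_ hzx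
          have := Submodule.mem_map_of_mem (f := N.mkQ) (hB l hl x hx)
          rw [Submodule.map_smul''] at this
          exact Submodule.smul_mono le_rfl le_top this
  obtain ⟨Z, hZ, hZ2⟩ := main n le_rfl
  have hli : LinearIndependent F (fun i : Fin n => Z i) :=
    LinearIndependent.comp hZ (fun i : Fin n => (⟨i, i.2⟩ : Set.Iio n))
      (fun a b h => Fin.ext (congrArg (fun t : Set.Iio n => (t : ℕ)) h))
  refine ⟨fun i => Z i, fun i => (hZ2 i i.2).1, hli, ?_, ?_⟩
  · have hle : Submodule.span F (Set.range (fun i : Fin n => Z i)) ≤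
        homogeneousSubmodule (Fin n) F 1 := by
      rw [Submodule.span_le]
      rintro _ ⟨i, rfl⟩
      exact (hZ2 i i.2).1
    haveI : Module.Finite F (homogeneousSubmodule (Fin n) F 1) :=
      Module.finite_of_finrank_pos (by rw [finrank_linear]; omega)
    have := Submodule.eq_of_le_of_finrank_eq hle (by
      rw [finrank_linear, finrank_span_eq_card hli]; simp)
    intro p hp
    rw [this]
    exact hp
  · intro i
    have : (fun i : Fin n => Z i) '' {j : Fin n | j < i} = Z '' Set.Iio (i : ℕ) := by
      ext y
      constructor
      · rintro ⟨j, hj, rfl⟩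
        exact ⟨j, hj, rfl⟩
      · rintro ⟨j, hj, rfl⟩
        have hj' : j < i := hj
        exact ⟨⟨j, by omega⟩, hj, rfl⟩
    rw [this]
    exact (hZ2 i i.2).2
end
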